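/- Let T = (T_1, …, T_n) be a Beurling tuple on a complex Hilbert space H, let j ∈ {1, …, n}, and let P = {p_1 < ⋯ < p_r} ⊆ {1, …, n} \ {j}. Then the defect space 𝒟_{T_j} equals the closed linear span of ⋃_{α ∈ ℤ_+^r} T_P^α(𝒟_{j,T,P}), where 𝒟_{T_j} is the closure of the range of D_{T_j} = (I − T_j*T_j)^{1/2} and 𝒟_{j,T,P} is the closure of the range of D²_{j,T,P}. -/

import Mathlib

/-!
Write `A = 1 - Tⱼ* Tⱼ = D²`. Since `A` and `D` are self-adjoint with the same kernel, both have
range closure `(ker A)ᗮ`, and the theorem becomes a statement about this closed subspace.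

*The span lies in `(ker A)ᗮ`* (`tuple_mapsTo_orthogonal_ker`). It suffices that `ker A` is invariant
under `Tᵢ*` for `i ≠ j`. Telescoping together with `Tₖ*ᵐ → 0` strips one factor at a time from
`𝕊ₙ⁻¹(T, T*) ≥ 0` and leaves the Szegő inequality for each pair `(Tᵢ, Tⱼ)`, namely `K ≥ Tⱼ K Tⱼ*`
with `K = 1 - Tᵢ Tᵢ*`. If `A h = 0` and `g = Tⱼ h`, then `Tⱼ* g = h` and `‖g‖ = ‖h‖`, so this
inequality at `g` reads `‖Tᵢ* g‖ ≤ ‖Tᵢ* h‖ = ‖Tⱼ* Tᵢ* g‖`. Hence `Tⱼ*` preserves the norm of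
`u = Tᵢ* g`, which forces `Tⱼ Tⱼ* u = u`. So `Tᵢ* h = Tⱼ* u` satisfies
`Tⱼ* Tⱼ Tᵢ* h = Tᵢ* h`, that is, `A Tᵢ* h = 0`.

*The range of `A` lies in the closed span* (`mem_of_forall_applyDelta_mem`). If `C = B - X B X*`
with `X` a contraction and `X*ᵐ → 0` strongly, then `B y = ∑ₘ Xᵐ C X*ᵐ y`. Iterating over the
elements of `P` writes `A y` as a limit of sums of vectors `T_P^α (D²_{j,T,P} z)`.
-/


open ContinuousLinearMap Filter Topology

variable {H : Type*} [NormedAddCommGroup H] [InnerProductSpace ℂ H] [CompleteSpace H]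

/-- `T^k = T 0 ^ k 0 * T 1 ^ k 1 * ⋯` in increasing index order. -/
noncomputable def finPow {n : ℕ} (T : Fin n → H →L[ℂ] H) (k : Fin n → ℕ) : H →L[ℂ] H :=
  ((List.finRange n).map fun i => T i ^ k i).prod

/-- `𝕊ₙ⁻¹(T, T*) = ∑_{k ∈ {0,1}ⁿ} (−1)^{|k|} T^k T^{*k}`. -/
noncomputable def szegoInv {n : ℕ} (T : Fin n → H →L[ℂ] H) : H →L[ℂ] H :=
  ∑ k : Fin n → Bool,
    ((-1 : ℂ) ^ (∑ i, if k i then 1 else 0)) •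
      (finPow T (fun i => if k i then 1 else 0) *
        adjoint (finPow T (fun i => if k i then 1 else 0)))

/-- A Szegő tuple: commuting contractions, `𝕊ₙ⁻¹(T,T*) ≥ 0`, each `Tᵢ` of class `C_{·0}`. -/
structure IsSzegoTuple {n : ℕ} (T : Fin n → H →L[ℂ] H) : Prop where
  comm : ∀ i j, T i * T j = T j * T i
  contraction : ∀ i, ‖T i‖ ≤ 1
  pos : (szegoInv T).IsPositive
  pure : ∀ i (h : H), Tendsto (fun m : ℕ => (adjoint (T i) ^ m) h) atTop (𝓝 0)

/-- A Beurling tuple: a Szegő tuple with `(I − Tᵢ*Tᵢ)(I − Tⱼ*Tⱼ) = 0` for `i ≠ j`. -/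
def IsBeurlingTuple {n : ℕ} (T : Fin n → H →L[ℂ] H) : Prop :=
  IsSzegoTuple T ∧
    ∀ i j, i ≠ j → (1 - adjoint (T i) * T i) * (1 - adjoint (T j) * T j) = 0

/-- Apply `∏_{k ∈ L} (I − Δ_{T k})` to `A`, where `Δ_X(A) = X A X*`. -/
noncomputable def applyDelta {n : ℕ} (T : Fin n → H →L[ℂ] H) (L : List (Fin n))
    (A : H →L[ℂ] H) : H →L[ℂ] H :=
  L.foldr (fun k B => B - T k * B * adjoint (T k)) A

/-- The truncated defect operator `D²_{j,T,P} = (∏_{k ∈ P} (I − Δ_{T k}))(I − Tⱼ*Tⱼ)`. -/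
noncomputable def truncDefectSq {n : ℕ} (T : Fin n → H →L[ℂ] H) (j : Fin n)
    (P : Finset (Fin n)) : H →L[ℂ] H :=
  applyDelta T (P.sort (· ≤ ·)) (1 - adjoint (T j) * T j)

/-- `D²_{j,T} = D²_{j,T,P}` for `P = {1,…,n} \ {j}`. -/
noncomputable def jointDefectSq {n : ℕ} (T : Fin n → H →L[ℂ] H) (j : Fin n) : H →L[ℂ] H :=
  truncDefectSq T j (Finset.univ.erase j)

/-- The `(i,j)`-th joint commutator `δᵢⱼ(T) = (∏_{k ∉ {i,j}} (I − Δ_{T k}))([Tⱼ, Tᵢ*])`. -/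
noncomputable def jointComm {n : ℕ} (T : Fin n → H →L[ℂ] H) (i j : Fin n) : H →L[ℂ] H :=
  applyDelta T (((Finset.univ.erase i).erase j).sort (· ≤ ·))
    (T j * adjoint (T i) - adjoint (T i) * T j)

/-- Extend a multi-index supported on `P` by zero: gives `T_P^α` via `finPow`. -/
def extendSupport {n : ℕ} (P : Finset (Fin n)) (α : ↥P → ℕ) : Fin n → ℕ :=
  fun i => if h : i ∈ P then α ⟨i, h⟩ else 0

/-! ### Pure contractions and telescoping -/

lemma sub_conj_telescope (X B : H →L[ℂ] H) (N : ℕ) (y : H) :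
    ∑ m ∈ Finset.range N, (X ^ m) ((B - X * B * adjoint X) ((adjoint X ^ m) y))
      = B y - (X ^ N) (B ((adjoint X ^ N) y)) := by
  induction N with
  | zero => simp
  | succ N ih =>
    rw [Finset.sum_range_succ, ih]
    have h1 : (adjoint X ^ (N + 1)) y = adjoint X ((adjoint X ^ N) y) := by
      rw [pow_succ', mul_apply_eq_comp]
    have h2 : ∀ z, (X ^ (N + 1)) z = (X ^ N) (X z) := fun z => by
      rw [pow_succ, mul_apply_eq_comp]
    simp only [h1, h2, sub_apply, mul_apply_eq_comp, map_sub]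
    abel

lemma norm_pow_apply_le (X : H →L[ℂ] H) (hX : ‖X‖ ≤ 1) (N : ℕ) (y : H) :
    ‖(X ^ N) y‖ ≤ ‖y‖ := by
  induction N with
  | zero => simp
  | succ N ih =>
    rw [pow_succ', mul_apply_eq_comp]
    calc ‖X ((X ^ N) y)‖ ≤ 1 * ‖(X ^ N) y‖ := X.le_of_opNorm_le hX _
      _ ≤ ‖y‖ := by rw [one_mul]; exact ih

/-- If `X` is a contraction of class `C_{·0}`, then `B y = ∑ₘ Xᵐ (B - X B X*) X*ᵐ y`. -/
lemma tendsto_sub_conj_sum (X B : H →L[ℂ] H) (hX : ‖X‖ ≤ 1) (y : H)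
    (hpure : Tendsto (fun m : ℕ => (adjoint X ^ m) y) atTop (𝓝 0)) :
    Tendsto (fun N : ℕ => ∑ m ∈ Finset.range N,
      (X ^ m) ((B - X * B * adjoint X) ((adjoint X ^ m) y))) atTop (𝓝 (B y)) := by
  simp only [sub_conj_telescope]
  have h0 : Tendsto (fun N : ℕ => B ((adjoint X ^ N) y)) atTop (𝓝 0) := by
    simpa [Function.comp_def] using (B.continuous.tendsto 0).comp hpure
  have h1 : Tendsto (fun N : ℕ => (X ^ N) (B ((adjoint X ^ N) y))) atTop (𝓝 0) :=
    squeeze_zero_norm (fun N => norm_pow_apply_le X hX N _) (by simpa using h0.norm)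
  simpa using tendsto_const_nhds.sub h1

/-- If `X*ᵐ → 0` strongly and `B - X B X*` has nonnegative quadratic form, then so does `B`. -/
lemma re_inner_nonneg_of_sub_conj (X B : H →L[ℂ] H)
    (hpure : ∀ y, Tendsto (fun m : ℕ => (adjoint X ^ m) y) atTop (𝓝 0))
    (hC : ∀ y, 0 ≤ (inner ℂ ((B - X * B * adjoint X) y) y).re) (y : H) :
    0 ≤ (inner ℂ (B y) y).re := by
  have step : ∀ z, (inner ℂ (B (adjoint X z)) (adjoint X z)).re ≤ (inner ℂ (B z) z).re := by
    intro z
    have := hC z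
    simp only [sub_apply, mul_apply_eq_comp, inner_sub_left,
      Complex.sub_re] at this
    rw [adjoint_inner_right]
    linarith
  have hle : ∀ N : ℕ, (inner ℂ (B ((adjoint X ^ N) y)) ((adjoint X ^ N) y)).re
      ≤ (inner ℂ (B y) y).re := by
    intro N
    induction N with
    | zero => simp
    | succ N ih =>
      rw [pow_succ', mul_apply_eq_comp]
      exact (step _).trans ih
  have hlim : Tendsto (fun N : ℕ => (inner ℂ (B ((adjoint X ^ N) y)) ((adjoint X ^ N) y)).re)
      atTop (𝓝 0) := by
    have h := ((B.continuous.tendsto 0).comp (hpure y)).inner (𝕜 := ℂ) (hpure y)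
    have h' := (Complex.continuous_re.tendsto _).comp h
    simpa [Function.comp_def] using h'
  exact le_of_tendsto hlim (Eventually.of_forall hle)

/-! ### Monomials in the tuple -/

lemma finPow_succ {n : ℕ} (T : Fin (n + 1) → H →L[ℂ] H) (k : Fin (n + 1) → ℕ) :
    finPow T k = T 0 ^ k 0 * finPow (fun i => T i.succ) (fun i => k i.succ) := by
  simp [finPow, List.finRange_succ, Function.comp_def]

lemma commute_finPow {n : ℕ} (T : Fin n → H →L[ℂ] H) (k : Fin n → ℕ) (X : H →L[ℂ] H)
    (hX : ∀ i, X * T i = T i * X) : Commute X (finPow T k) := by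
  refine Commute.list_prod_right _ _ ?_
  intro y hy
  obtain ⟨i, -, rfl⟩ := List.mem_map.1 hy
  exact Commute.pow_right (hX i) _

lemma finPow_mul {n : ℕ} (T : Fin n → H →L[ℂ] H) (hc : ∀ i j, T i * T j = T j * T i)
    (a b : Fin n → ℕ) : finPow T a * finPow T b = finPow T (fun i => a i + b i) := by
  induction n with
  | zero => simp [finPow]
  | succ n ih =>
    simp only [finPow_succ]
    rw [← ih (fun i => T i.succ) (fun i j => hc _ _), pow_add]
    have h : Commute (T 0 ^ b 0) (finPow (fun i => T i.succ) fun i => a i.succ) :=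
      (commute_finPow _ _ _ (fun i => hc _ _)).pow_left _
    simp only [mul_assoc]
    rw [← mul_assoc (finPow _ _) (T 0 ^ b 0), ← h.eq, mul_assoc]

lemma finPow_zero {n : ℕ} (T : Fin n → H →L[ℂ] H) : finPow T (fun _ => 0) = 1 := by
  simp [finPow]

lemma finPow_single {n : ℕ} (T : Fin n → H →L[ℂ] H) (k : Fin n) :
    finPow T (fun i => if i = k then 1 else 0) = T k := by
  unfold finPow
  rw [List.prod_map_eq_pow_single k]
  · rw [List.count_eq_one_of_mem (List.nodup_finRange n) (List.mem_finRange k)]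
    simp
  · intro i hi _
    simp [hi]

/-- The monoid generated by `T_k`, `k ∈ P`, consists of the monomials `T_P^α`. -/
lemma exists_finPow_of_mem_closure {n : ℕ} (T : Fin n → H →L[ℂ] H)
    (hc : ∀ i j, T i * T j = T j * T i) (P : Finset (Fin n)) {g : H →L[ℂ] H}
    (hg : g ∈ Submonoid.closure (T '' (P : Set (Fin n)))) :
    ∃ α : ↥P → ℕ, g = finPow T (extendSupport P α) := by
  induction hg using Submonoid.closure_induction with
  | mem x hx =>
    obtain ⟨k, hk, rfl⟩ := hx
    refine ⟨fun i => if (i : Fin n) = k then 1 else 0, ?_⟩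
    rw [← finPow_single T k]
    congr 1
    funext i
    by_cases hi : i ∈ P
    · simp [extendSupport, hi]
    · have : i ≠ k := fun h => hi (h ▸ hk)
      simp [extendSupport, hi, this]
  | one =>
    refine ⟨fun _ => 0, ?_⟩
    rw [← finPow_zero T]
    congr 1
    funext i
    simp [extendSupport]
  | mul x y _ _ hx hy =>
    obtain ⟨a, rfl⟩ := hx
    obtain ⟨b, rfl⟩ := hy
    refine ⟨fun i => a i + b i, ?_⟩
    rw [finPow_mul T hc]
    congr 1
    funext i
    by_cases hi : i ∈ P <;> simp [extendSupport, hi]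

/-! ### The Szegő inequality for pairs -/

/-- `𝕊ₙ₊₁⁻¹(T, T*) = S - T₀ S T₀*`, where `S` is the Szegő operator of `(T₁, …, Tₙ)`. -/
lemma szegoInv_succ {n : ℕ} (T : Fin (n + 1) → H →L[ℂ] H) :
    szegoInv T = szegoInv (fun i => T i.succ)
      - T 0 * szegoInv (fun i => T i.succ) * adjoint (T 0) := by
  unfold szegoInv
  rw [← (Fin.consEquiv (fun _ => Bool)).sum_comp, Fintype.sum_prod_type, Fintype.sum_bool,
    add_comm, sub_eq_add_neg, Finset.mul_sum, Finset.sum_mul, ← Finset.sum_neg_distrib]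
  congr 1
  · refine Finset.sum_congr rfl fun k _ => ?_
    simp [finPow_succ, Fin.sum_univ_succ, Fin.consEquiv]
  · refine Finset.sum_congr rfl fun k _ => ?_
    simp only [finPow_succ, Fin.sum_univ_succ, Fin.consEquiv, Equiv.coe_fn_mk, Fin.cons_zero,
      Fin.cons_succ, if_true, pow_one, pow_add, mul_smul_comm, smul_mul_assoc]
    rw [← star_eq_adjoint, ← star_eq_adjoint, ← star_eq_adjoint, star_mul]
    simp [mul_assoc]

lemma szegoInv_eq_applyDelta {n : ℕ} (T : Fin n → H →L[ℂ] H) :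
    szegoInv T = applyDelta T (List.finRange n) 1 := by
  induction n with
  | zero =>
    simp [szegoInv, finPow, applyDelta, ← star_eq_adjoint]
  | succ n ih =>
    rw [szegoInv_succ, ih, List.finRange_succ]
    simp [applyDelta, List.foldr_map]

lemma applyDelta_perm {n : ℕ} (T : Fin n → H →L[ℂ] H) (hc : ∀ i j, T i * T j = T j * T i)
    {L L' : List (Fin n)} (h : L.Perm L') (A : H →L[ℂ] H) :
    applyDelta T L A = applyDelta T L' A := by
  have : LeftCommutative (fun (k : Fin n) (B : H →L[ℂ] H) => B - T k * B * adjoint (T k)) := by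
    refine ⟨fun a b B => ?_⟩
    have h1 : T a * (T b * B * adjoint (T b)) * adjoint (T a)
        = T b * (T a * B * adjoint (T a)) * adjoint (T b) := by
      have h2 : adjoint (T b) * adjoint (T a) = adjoint (T a) * adjoint (T b) := by
        rw [← star_eq_adjoint, ← star_eq_adjoint, ← star_mul, ← star_mul, hc]
      calc _ = (T a * T b) * B * (adjoint (T b) * adjoint (T a)) := by simp only [mul_assoc]
        _ = _ := by rw [hc, h2]; simp only [mul_assoc]
    simp only [mul_sub, sub_mul, h1]
    abel
  exact h.foldr_eq A

lemma re_inner_nonneg_of_applyDelta {n : ℕ} (T : Fin n → H →L[ℂ] H) (hT : IsSzegoTuple T)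
    (L : List (Fin n)) (A : H →L[ℂ] H)
    (h : ∀ y, 0 ≤ (inner ℂ (applyDelta T L A y) y).re) (y : H) :
    0 ≤ (inner ℂ (A y) y).re := by
  induction L with
  | nil => exact h y
  | cons k L ih => exact ih (re_inner_nonneg_of_sub_conj (T k) _ (hT.pure k) h)

/-- Every pair of members of a Szegő tuple satisfies the Szegő inequality
`K - Tⱼ K Tⱼ* ≥ 0`, where `K = 1 - Tᵢ Tᵢ*`. -/
lemma pair_szego_nonneg {n : ℕ} (T : Fin n → H →L[ℂ] H) (hT : IsSzegoTuple T)
    {i j : Fin n} (hij : i ≠ j) (y : H) :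
    0 ≤ (inner ℂ (applyDelta T [j, i] 1 y) y).re := by
  have hsub : [j, i].Subperm (List.finRange n) :=
    (List.nodup_cons.2 ⟨by simpa using hij.symm, by simp⟩ : [j, i].Nodup).subperm
      (fun x _ => List.mem_finRange x)
  obtain ⟨L₀, hL₀, hs⟩ := hsub
  obtain ⟨L, hL⟩ := hs.exists_perm_append
  have hp := (hL.trans (hL₀.append_right L)).trans List.perm_append_comm
  refine re_inner_nonneg_of_applyDelta T hT L _ (fun z => ?_) y
  have h2 : applyDelta T L (applyDelta T [j, i] 1) = szegoInv T := by
    rw [szegoInv_eq_applyDelta, applyDelta_perm T hT.comm hp]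
    simp [applyDelta, List.foldr_append]
  rw [h2]
  exact (Complex.le_def.1 (hT.pos.inner_nonneg_left z)).1

/-! ### Invariance of the defect space -/

/-- A contraction preserving the norm of `u` satisfies `X* X u = u`. -/
lemma adjoint_apply_apply_of_norm_le (X : H →L[ℂ] H) (hX : ‖X‖ ≤ 1) (u : H)
    (hu : ‖u‖ ≤ ‖X u‖) : adjoint X (X u) = u := by
  have h1 : ‖adjoint X (X u)‖ ≤ ‖X u‖ := by
    have := (adjoint X).le_of_opNorm_le (c := 1) (by simpa using hX) (X u)
    simpa using this
  have h2 : ‖X u‖ ≤ ‖u‖ := by simpa using X.le_of_opNorm_le hX u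
  have h3 : (inner ℂ (adjoint X (X u)) u).re = ‖X u‖ ^ 2 := by
    rw [adjoint_inner_left]
    exact inner_self_eq_norm_sq (𝕜 := ℂ) (X u)
  have h4 := norm_sub_sq (𝕜 := ℂ) (adjoint X (X u)) u
  simp only [RCLike.re_to_complex, h3] at h4
  have h5 : ‖adjoint X (X u) - u‖ ^ 2 ≤ 0 := by
    nlinarith [norm_nonneg (adjoint X (X u)), norm_nonneg u, norm_nonneg (X u)]
  have h6 : ‖adjoint X (X u) - u‖ = 0 := by
    nlinarith [norm_nonneg (adjoint X (X u) - u)]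
  exact sub_eq_zero.1 (norm_eq_zero.1 h6)

/-- `ker (1 - Tⱼ* Tⱼ)` is invariant under `Tᵢ*` for `i ≠ j`. -/
lemma adjoint_mem_ker_defect {n : ℕ} (T : Fin n → H →L[ℂ] H) (hT : IsSzegoTuple T)
    {i j : Fin n} (hij : i ≠ j) (h : H) (hh : adjoint (T j) (T j h) = h) :
    adjoint (T j) (T j (adjoint (T i) h)) = adjoint (T i) h := by
  have hcomm : ∀ z, adjoint (T j) (adjoint (T i) z) = adjoint (T i) (adjoint (T j) z) := by
    intro z
    have h2 : adjoint (T j) * adjoint (T i) = adjoint (T i) * adjoint (T j) := by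
      rw [← star_eq_adjoint, ← star_eq_adjoint, ← star_mul, ← star_mul, hT.comm]
    simpa using congrArg (fun X : H →L[ℂ] H => X z) h2
  set g := T j h with hg
  have hnorm : ‖g‖ ^ 2 = ‖h‖ ^ 2 := by
    have := apply_norm_sq_eq_inner_adjoint_left (T j) h
    rw [hg, this]
    change (inner ℂ (adjoint (T j) (T j h)) h).re = _
    rw [← hg, hh]
    exact inner_self_eq_norm_sq (𝕜 := ℂ) h
  have hpair := pair_szego_nonneg T hT hij g
  have e1 : ∀ z w : H, inner ℂ (T i (adjoint (T i) z)) w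
      = inner ℂ (adjoint (T i) z) (adjoint (T i) w) := fun z w => by
    rw [adjoint_inner_right]
  have e2 : ∀ z w : H, inner ℂ (T j z) w = inner ℂ z (adjoint (T j) w) := fun z w => by
    rw [adjoint_inner_right]
  have e3 : ∀ z : H, (inner ℂ z z).re = ‖z‖ ^ 2 := fun z => inner_self_eq_norm_sq (𝕜 := ℂ) z
  simp only [applyDelta, List.foldr_cons, List.foldr_nil, mul_one, sub_apply,
    mul_apply_eq_comp, one_apply_eq_self, inner_sub_left, e2, hh,
    e1, Complex.sub_re, e3] at hpair
  have hle : ‖adjoint (T i) g‖ ≤ ‖adjoint (T j) (adjoint (T i) g)‖ := by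
    rw [hcomm, hh]
    refine le_of_sq_le_sq ?_ (norm_nonneg _)
    linarith
  have key := adjoint_apply_apply_of_norm_le (adjoint (T j))
    (by simpa using hT.contraction j) _ hle
  rw [adjoint_adjoint, hcomm, hh] at key
  rw [key, hcomm, hh]

lemma tuple_mapsTo_orthogonal_ker {n : ℕ} (T : Fin n → H →L[ℂ] H) (hT : IsSzegoTuple T)
    {i j : Fin n} (hij : i ≠ j) (x : H)
    (hx : x ∈ (1 - adjoint (T j) * T j : H →L[ℂ] H).kerᗮ) :
    T i x ∈ (1 - adjoint (T j) * T j : H →L[ℂ] H).kerᗮ := by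
  rw [Submodule.mem_orthogonal] at hx ⊢
  intro u hu
  rw [← adjoint_inner_left]
  apply hx
  have hu' : adjoint (T j) (T j u) = u := by
    have : u - adjoint (T j) (T j u) = 0 := by simpa using hu
    exact (sub_eq_zero.1 this).symm
  have := adjoint_mem_ker_defect T hT hij u hu'
  simp [this]

/-! ### Comparison of the two closed subspaces -/

lemma applyDelta_apply_mem {n : ℕ} (T : Fin n → H →L[ℂ] H) (L : List (Fin n)) (A : H →L[ℂ] H)
    (M : Submodule ℂ H) (hA : ∀ x, A x ∈ M) (hM : ∀ i ∈ L, ∀ x ∈ M, T i x ∈ M) (x : H) :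
    applyDelta T L A x ∈ M := by
  induction L generalizing x with
  | nil => exact hA x
  | cons k L ih =>
    have ih' := ih (fun i hi => hM i (List.mem_cons_of_mem _ hi))
    exact M.sub_mem (ih' x) (hM k List.mem_cons_self _ (ih' _))

lemma finPow_extendSupport_apply_mem {n : ℕ} (T : Fin n → H →L[ℂ] H) (P : Finset (Fin n))
    (α : ↥P → ℕ) (M : Submodule ℂ H) (hM : ∀ i ∈ P, ∀ x ∈ M, T i x ∈ M) (x : H) (hx : x ∈ M) :
    finPow T (extendSupport P α) x ∈ M := by
  have hpow : ∀ (i : Fin n) (x : H), x ∈ M → (T i ^ extendSupport P α i) x ∈ M := by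
    intro i x hx
    by_cases hi : i ∈ P
    · generalize extendSupport P α i = m
      induction m with
      | zero => simpa using hx
      | succ m ih =>
        rw [pow_succ', mul_apply_eq_comp]
        exact hM i hi _ ih
    · simpa [extendSupport, hi] using hx
  unfold finPow
  induction List.finRange n with
  | nil => simpa using hx
  | cons k L ih =>
    rw [List.map_cons, List.prod_cons, mul_apply_eq_comp]
    exact hpow k _ ih

/-- A closed subspace containing `g (∏_{k ∈ L} (I - Δ_{T k})) (A) y` for all `g` in a monoid `S`
containing the `T k`, `k ∈ L`, contains every `g (A y)`; for `g = 1` it contains the range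
of `A`. Carrying `g` along makes the induction on `L` go through. -/
lemma mem_of_forall_applyDelta_mem {n : ℕ} (T : Fin n → H →L[ℂ] H) (hT : IsSzegoTuple T)
    (L : List (Fin n)) (A : H →L[ℂ] H) (S : Submonoid (H →L[ℂ] H)) (hS : ∀ k ∈ L, T k ∈ S)
    (M : Submodule ℂ H) (hM : IsClosed (M : Set H))
    (h : ∀ g ∈ S, ∀ y, g (applyDelta T L A y) ∈ M) : ∀ g ∈ S, ∀ y, g (A y) ∈ M := by
  induction L with
  | nil => exact h
  | cons k L ih =>
    refine ih (fun i hi => hS i (List.mem_cons_of_mem _ hi)) fun g hg y => ?_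
    have hlim := (g.continuous.tendsto _).comp (tendsto_sub_conj_sum (T k) (applyDelta T L A)
      (hT.contraction k) y (hT.pure k y))
    refine hM.mem_of_tendsto hlim (Eventually.of_forall fun N => ?_)
    simp only [Function.comp_apply, map_sum]
    exact M.sum_mem fun m _ =>
      h (g * T k ^ m) (S.mul_mem hg (S.pow_mem (hS k List.mem_cons_self) m)) _

/-- For `D` self-adjoint, the range closures of `D` and of `D²` are both `(ker D²)ᗮ`. -/
lemma closure_range_eq_orthogonal_ker (D : H →L[ℂ] H) (hD : adjoint D = D) :
    closure (Set.range ⇑D) = ((D * D).kerᗮ : Set H) ∧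
      (D * D).kerᗮ = (D * D).range.topologicalClosure := by
  have hDD : adjoint (D * D) = D * D := by
    rw [← star_eq_adjoint, star_mul, star_eq_adjoint, hD]
  have hker : (D * D).ker = D.ker := by
    ext x
    constructor
    · intro hx
      have hx : D (D x) = 0 := hx
      have : inner ℂ (D x) (D x) = 0 := by
        rw [← adjoint_inner_right, hD, hx, inner_zero_right]
      exact inner_self_eq_zero.1 this
    · intro hx
      have hx : D x = 0 := hx
      change D (D x) = 0
      rw [hx, map_zero]
  refine ⟨?_, ?_⟩
  · rw [hker, orthogonal_ker, hD, Submodule.topologicalClosure_coe]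
    rfl
  · rw [orthogonal_ker, hDD]

/-- For a Beurling tuple `T`, `j`, and `P ⊆ {1,…,n} \ {j}`, the defect
space `𝒟_{Tⱼ}` (closure of the range of `D_{Tⱼ} = (I − Tⱼ*Tⱼ)^{1/2}`) equals the closed
linear span of `⋃_{α ∈ ℤ₊^P} T_P^α (𝒟_{j,T,P})`. -/
theorem beurling_defectSpace_span {n : ℕ} (hn : 0 < n) (T : Fin n → H →L[ℂ] H)
    (hT : IsBeurlingTuple T) (j : Fin n) (P : Finset (Fin n)) (hP : j ∉ P)
    (D : H →L[ℂ] H) (hDpos : D.IsPositive) (hDsq : D * D = 1 - adjoint (T j) * T j) :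
    closure (Set.range ⇑D) =
      closure (↑(Submodule.span ℂ
        (⋃ α : ↥P → ℕ,
          ⇑(finPow T (extendSupport P α)) ''
            closure (Set.range ⇑(truncDefectSq T j P)))) : Set H) := by
  have hS := hT.1
  obtain ⟨h1, h2⟩ := closure_range_eq_orthogonal_ker D hDpos.isSelfAdjoint.adjoint_eq
  rw [hDsq] at h1 h2
  rw [h1]
  have hcl : IsClosed (((1 - adjoint (T j) * T j : H →L[ℂ] H).kerᗮ : Submodule ℂ H) : Set H) :=
    Submodule.isClosed_orthogonal _
  have hinv : ∀ i ∈ P, ∀ x ∈ (1 - adjoint (T j) * T j : H →L[ℂ] H).kerᗮ,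
      T i x ∈ (1 - adjoint (T j) * T j : H →L[ℂ] H).kerᗮ := fun i hi x hx =>
    tuple_mapsTo_orthogonal_ker T hS (ne_of_mem_of_not_mem hi hP) x hx
  have hmemA : ∀ x, (1 - adjoint (T j) * T j) x
      ∈ (1 - adjoint (T j) * T j : H →L[ℂ] H).kerᗮ := fun x => by
    rw [h2]
    exact Submodule.le_topologicalClosure _ ⟨x, rfl⟩
  apply Set.Subset.antisymm
  · rw [← Submodule.topologicalClosure_coe, SetLike.coe_subset_coe, h2]
    refine Submodule.topologicalClosure_minimal _ ?_ (Submodule.isClosed_topologicalClosure _)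
    rintro _ ⟨x, rfl⟩
    refine mem_of_forall_applyDelta_mem T hS (P.sort (· ≤ ·)) (1 - adjoint (T j) * T j)
      (Submonoid.closure (T '' (P : Set (Fin n))))
      (fun k hk => Submonoid.subset_closure ⟨k, by simpa using hk, rfl⟩) _
      (Submodule.isClosed_topologicalClosure _) (fun g hg y => ?_) 1 (Submonoid.one_mem _) x
    obtain ⟨α, rfl⟩ := exists_finPow_of_mem_closure T hS.comm P hg
    exact Submodule.le_topologicalClosure _ (Submodule.subset_span
      (Set.mem_iUnion.2 ⟨α, _, subset_closure ⟨y, rfl⟩, rfl⟩))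
  · refine closure_minimal ?_ hcl
    rw [SetLike.coe_subset_coe, Submodule.span_le]
    refine Set.iUnion_subset fun α => ?_
    rintro _ ⟨x, hx, rfl⟩
    refine finPow_extendSupport_apply_mem T P α _ hinv x ?_
    refine closure_minimal ?_ hcl hx
    rintro _ ⟨y, rfl⟩
    exact applyDelta_apply_mem T _ _ _ hmemA (fun i hi => hinv i (by simpa using hi)) y
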